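/- Let $1<\alpha<2$ with $\alpha<n$ and $n\geq 2$, let $B\subset\mathbb{R}^n$ be the open unit ball, $w_n(x)=(1-|x|^2)^{(\alpha-1)/2}$, and $2^*=2n/(n-\alpha)$. There exists a constant $c'=c'(\alpha,n)>0$ such that for every continuous function $u$ with compact support in $B$: $\int_B\int_B\left(\frac{u(x)}{w_n(x)}-\frac{u(y)}{w_n(y)}\right)^2\frac{w_n(x)w_n(y)}{|x-y|^{n+\alpha}}\,dx\,dy + \int_B u^2(x)\,dx \;\geq\; c'\left(\int_B|u(x)|^{2^*}\,dx\right)^{2/2^*}$. -/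

import Mathlib

open MeasureTheory Metric Set Filter
open scoped ENNReal Topology

/-- The weight `w_n(x) = (1 - |x|²)^{(α-1)/2}` on the unit ball. -/
noncomputable def w (n : ℕ) (α : ℝ) (x : EuclideanSpace ℝ (Fin n)) : ℝ :=
  (1 - ‖x‖ ^ 2) ^ ((α - 1) / 2)

/-!
For `x` in the ball and a scale `r ≤ 1`, the ball of radius `r / 2` about `(1 - r) x` stays in the
unit ball, within distance `2 r` of `x`, and the weight there is bounded below by a multiple of its
value at `x`. Comparing `u x` with `u y` and averaging over `y` in that ball gives, with `D x` the
inner integral of the energy, `u(x)² ≤ C (r^α D(x) + r^(-n) ∫ u²)`, the last integral being over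
the small ball. Hölder's inequality bounds the second term by `r^(α-n) ‖u‖²` in the norm of
`L^{2*}`, while for `r ≥ 1` the estimate at scale `1` is enough once `‖u‖₂²` is added to `D(x)`.
Optimising in `r > 0` yields `|u(x)|^{2*} ≤ C ‖u‖^{2*-2} (D(x) + ‖u‖₂²)`, and integrating in `x`
and dividing by `‖u‖^{2*-2}` proves the inequality.
-/

open Module
open scoped NNReal

theorem le_two_mul_rpow_mul_rpow_of_forall_le {s t : ℝ} (hs : 0 < s) (ht : 0 < t)
    {a b M C : ℝ≥0∞} (hb : b ≠ 0) (hM : M ≠ 0) (hM' : M ≠ ∞)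
    (h : ∀ r : ℝ≥0, 0 < r → a ≤ C * ((r : ℝ≥0∞) ^ s * b + (r : ℝ≥0∞) ^ (-t) * M)) :
    a ≤ 2 * C * (M ^ (s / (s + t)) * b ^ (t / (s + t))) := by
  have hst : 0 < s + t := add_pos hs ht
  rcases eq_or_ne b ∞ with rfl | hb'
  · have hM_rpow : M ^ (s / (s + t)) ≠ 0 := by
      simp [ENNReal.rpow_eq_zero_iff, hM, hM']
    rw [ENNReal.top_rpow_of_pos (div_pos ht hst), ENNReal.mul_top hM_rpow]
    calc a ≤ C * ∞ := by simpa using h 1 one_pos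
      _ ≤ 2 * C * ∞ := by
        gcongr
        exact le_mul_of_one_le_left' one_le_two
  -- The scale balancing the two terms of the hypothesis.
  set ρ : ℝ≥0∞ := (M / b) ^ (1 / (s + t)) with hρ
  have hMb : M / b ≠ ∞ := ENNReal.div_ne_top hM' hb
  have hρ_pos : 0 < ρ := ENNReal.rpow_pos (ENNReal.div_pos hM hb') hMb
  have hρ_top : ρ ≠ ∞ := ENNReal.rpow_ne_top_of_nonneg (by positivity) hMb
  have hfirst : ρ ^ s * b = M ^ (s / (s + t)) * b ^ (t / (s + t)) := by
    rw [hρ, ← ENNReal.rpow_mul, one_div_mul_eq_div, ENNReal.div_rpow_of_nonneg _ _ (by positivity),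
      show t / (s + t) = 1 - s / (s + t) by field_simp; ring, ENNReal.rpow_sub _ _ hb hb',
      ENNReal.rpow_one]
    simp only [div_eq_mul_inv]
    ring
  have hsecond : ρ ^ (-t) * M = ρ ^ s * b := by
    have hρst : ρ ^ (s + t) = M / b := by
      rw [hρ, ← ENNReal.rpow_mul, one_div_mul_cancel hst.ne', ENNReal.rpow_one]
    calc ρ ^ (-t) * M = ρ ^ (-t) * (ρ ^ (s + t) * b) := by
          rw [hρst, ENNReal.div_mul_cancel hb hb']
      _ = ρ ^ s * b := by
          rw [← mul_assoc, ← ENNReal.rpow_add _ _ hρ_pos.ne' hρ_top]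
          ring_nf
  have hopt := h ρ.toNNReal (ENNReal.toNNReal_pos hρ_pos.ne' hρ_top)
  rw [ENNReal.coe_toNNReal hρ_top, hsecond, hfirst] at hopt
  refine hopt.trans_eq ?_
  ring

/-- The critical Sobolev exponent `2* = 2d / (d - α)` in dimension `d`. -/
noncomputable def sobolevExponent (d α : ℝ) : ℝ := 2 * d / (d - α)

section sobolevExponent

variable {d α : ℝ}

theorem two_lt_sobolevExponent (hα : 0 < α) (hαd : α < d) : 2 < sobolevExponent d α := by
  rw [sobolevExponent, lt_div_iff₀ (by linarith)]
  linarith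

theorem sobolevExponent_pos (hα : 0 < α) (hαd : α < d) : 0 < sobolevExponent d α :=
  two_pos.trans (two_lt_sobolevExponent hα hαd)

theorem one_half_sub_one_div_sobolevExponent (hα : 0 < α) (hαd : α < d) :
    1 / 2 - 1 / sobolevExponent d α = α / d / 2 := by
  have hd : d ≠ 0 := (hα.trans hαd).ne'
  rw [sobolevExponent]
  field_simp
  ring

theorem rpow_sobolevExponent_le_of_sq_le (hα : 0 < α) (hαd : α < d) {a b N C : ℝ≥0∞}
    (h : a ^ 2 ≤ C * ((N ^ 2) ^ (α / d) * b ^ ((d - α) / d))) :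
    a ^ sobolevExponent d α ≤
      C ^ (sobolevExponent d α / 2) * N ^ (sobolevExponent d α - 2) * b := by
  have hd : 0 < d := hα.trans hαd
  have hdα : 0 < d - α := sub_pos.2 hαd
  have hp := sobolevExponent_pos hα hαd
  have hN : 2 * (α / d * (sobolevExponent d α / 2)) = sobolevExponent d α - 2 := by
    rw [sobolevExponent]
    field_simp
    ring
  have hb : (d - α) / d * (sobolevExponent d α / 2) = 1 := by
    rw [sobolevExponent]
    field_simp
  calc a ^ sobolevExponent d α = (a ^ 2) ^ (sobolevExponent d α / 2) := by
        rw [← ENNReal.rpow_natCast_mul, Nat.cast_ofNat, mul_div_cancel₀ _ two_ne_zero]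
    _ ≤ (C * ((N ^ 2) ^ (α / d) * b ^ ((d - α) / d))) ^ (sobolevExponent d α / 2) := by gcongr
    _ = C ^ (sobolevExponent d α / 2) * N ^ (sobolevExponent d α - 2) * b := by
        rw [ENNReal.mul_rpow_of_nonneg _ _ (by positivity),
          ENNReal.mul_rpow_of_nonneg _ _ (by positivity), ← ENNReal.rpow_mul, ← ENNReal.rpow_mul,
          ← ENNReal.rpow_natCast_mul, Nat.cast_ofNat, hN, hb, ENNReal.rpow_one, mul_assoc]

end sobolevExponent

section Lp

variable {X : Type*} [MeasurableSpace X] {μ : Measure X}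

theorem eLpNorm_ofReal_rpow_eq_lintegral {F : Type*} [ENorm F] {f : X → F} {p : ℝ} (hp : 0 < p) :
    eLpNorm f (ENNReal.ofReal p) μ ^ p = ∫⁻ x, ‖f x‖ₑ ^ p ∂μ := by
  simpa [ENNReal.ofReal, hp.le] using
    eLpNorm_nnreal_pow_eq_lintegral (f := f) (μ := μ) (Real.toNNReal_pos.2 hp).ne'

theorem eLpNorm_two_sq_eq_lintegral {F : Type*} [ENorm F] {f : X → F} :
    eLpNorm f 2 μ ^ 2 = ∫⁻ x, ‖f x‖ₑ ^ 2 ∂μ := by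
  simpa using eLpNorm_ofReal_rpow_eq_lintegral (f := f) (μ := μ) two_pos

theorem ofReal_integral_norm_rpow_eq_eLpNorm_sq {F : Type*} [NormedAddCommGroup F] {f : X → F}
    {p : ℝ} (hp : 0 < p) (hf : MemLp f (ENNReal.ofReal p) μ) :
    ENNReal.ofReal ((∫ x, ‖f x‖ ^ p ∂μ) ^ (2 / p)) = eLpNorm f (ENNReal.ofReal p) μ ^ 2 := by
  have hI : 0 ≤ ∫ x, ‖f x‖ ^ p ∂μ := integral_nonneg fun x => by positivity
  rw [hf.eLpNorm_eq_integral_rpow_norm (by simpa using hp) ENNReal.ofReal_ne_top,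
    ENNReal.toReal_ofReal hp.le, ← ENNReal.ofReal_pow (by positivity), ← Real.rpow_mul_natCast hI,
    Nat.cast_ofNat, inv_mul_eq_div]

theorem setLIntegral_enorm_sq_le_eLpNorm_sobolevExponent {F : Type*} [NormedAddCommGroup F]
    {f : X → F} {d α : ℝ} (hα : 0 < α) (hαd : α < d) {s : Set X}
    (hf : AEStronglyMeasurable f (μ.restrict s)) :
    ∫⁻ x in s, ‖f x‖ₑ ^ 2 ∂μ ≤
      eLpNorm f (ENNReal.ofReal (sobolevExponent d α)) (μ.restrict s) ^ 2 * μ s ^ (α / d) := by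
  have hp := two_lt_sobolevExponent hα hαd
  have hHolder := eLpNorm_le_eLpNorm_mul_rpow_measure_univ (p := 2)
    (q := ENNReal.ofReal (sobolevExponent d α)) (by simpa using ENNReal.ofReal_le_ofReal hp.le) hf
  rw [Measure.restrict_apply_univ, ENNReal.toReal_ofReal (two_pos.trans hp).le,
    ENNReal.toReal_ofNat, one_half_sub_one_div_sobolevExponent hα hαd] at hHolder
  calc ∫⁻ x in s, ‖f x‖ₑ ^ 2 ∂μ = eLpNorm f 2 (μ.restrict s) ^ 2 :=
        eLpNorm_two_sq_eq_lintegral.symm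
    _ ≤ (eLpNorm f (ENNReal.ofReal (sobolevExponent d α)) (μ.restrict s) *
          μ s ^ (α / d / 2)) ^ 2 := by gcongr
    _ = _ := by
        rw [mul_pow, ← ENNReal.rpow_mul_natCast, Nat.cast_ofNat, div_mul_cancel₀ _ two_ne_zero]

end Lp

/-- The integrand `(u(x)/ω(x) - u(y)/ω(y))² ω(x) ω(y) / |x - y|^β` of the weighted Gagliardo
energy. -/
noncomputable def weightedGagliardoKernel {E : Type*} [NormedAddCommGroup E] (ω : E → ℝ) (β : ℝ)
    (u : E → ℝ) (x y : E) : ℝ :=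
  (u x / ω x - u y / ω y) ^ 2 * (ω x * ω y) / ‖x - y‖ ^ β

/-- The inner integral `∫_Ω (u(x)/ω(x) - u(y)/ω(y))² ω(x) ω(y) / |x - y|^β dμ(y)` of the weighted
Gagliardo energy; it is valued in `ℝ≥0∞`, so that it needs no integrability of `u`. -/
noncomputable def weightedGagliardoDensity {E : Type*} [NormedAddCommGroup E] [MeasurableSpace E]
    (μ : Measure E) (Ω : Set E) (ω : E → ℝ) (β : ℝ) (u : E → ℝ) (x : E) : ℝ≥0∞ :=
  ∫⁻ y in Ω, ENNReal.ofReal (weightedGagliardoKernel ω β u x y) ∂μ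

/-- Every point `x` of `Ω` sees, at each scale `r ≤ 1`, a ball of radius `r / 2` inside `Ω` and
within distance `2 * r` of `x`, on which the weight `ω` is at least `ω x / A`. For `ω = 1` this is
the interior corkscrew condition. -/
structure IsWeightedCorkscrew {E : Type*} [NormedAddCommGroup E] (Ω : Set E) (ω : E → ℝ)
    (A : ℝ≥0) : Prop where
  pos : ∀ x ∈ Ω, 0 < ω x
  exists_ball : ∀ x ∈ Ω, ∀ r : ℝ, 0 < r → r ≤ 1 →
    ∃ z, ball z (r / 2) ⊆ Ω ∩ closedBall x (2 * r) ∧ ∀ y ∈ ball z (r / 2), ω x ≤ A * ω y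

theorem sq_le_of_weight_le {a b ω η A : ℝ} (hω : 0 < ω) (hη : 0 < η) (h : ω ≤ A * η) :
    a ^ 2 ≤ 2 * A * ((a / ω - b / η) ^ 2 * (ω * η)) + 2 * A ^ 2 * b ^ 2 := by
  have : 0 < A := pos_of_mul_pos_left (hω.trans_le h) hη.le
  obtain ⟨s, rfl⟩ : ∃ s, a = s * ω := ⟨a / ω, by field_simp⟩
  obtain ⟨t, rfl⟩ : ∃ t, b = t * η := ⟨b / η, by field_simp⟩
  rw [mul_div_cancel_right₀ _ hω.ne', mul_div_cancel_right₀ _ hη.ne']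
  have hωω : ω ^ 2 ≤ A * (ω * η) := by nlinarith
  calc (s * ω) ^ 2 = ((s - t) * ω + t * ω) ^ 2 := by ring
    _ ≤ 2 * (((s - t) * ω) ^ 2 + (t * ω) ^ 2) := add_sq_le
    _ = 2 * ((s - t) ^ 2 * ω ^ 2 + t ^ 2 * ω ^ 2) := by ring
    _ ≤ 2 * ((s - t) ^ 2 * (A * (ω * η)) + t ^ 2 * (A * η) ^ 2) := by gcongr
    _ = 2 * A * ((s - t) ^ 2 * (ω * η)) + 2 * A ^ 2 * (t * η) ^ 2 := by ring

section Kernel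

variable {E : Type*} [NormedAddCommGroup E] {Ω : Set E} {ω : E → ℝ} {A : ℝ≥0} {β : ℝ}
  {u : E → ℝ} {x y : E}

theorem sq_sub_mul_le_rpow_mul_weightedGagliardoKernel {R : ℝ} (hβ : 0 ≤ β) (hx : 0 ≤ ω x)
    (hy : 0 ≤ ω y) (hxy : ‖x - y‖ ≤ R) :
    (u x / ω x - u y / ω y) ^ 2 * (ω x * ω y) ≤ R ^ β * weightedGagliardoKernel ω β u x y := by
  rcases eq_or_ne x y with rfl | hne
  · simp [weightedGagliardoKernel]
  have hnorm : 0 < ‖x - y‖ := norm_sub_pos_iff.2 hne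
  rw [weightedGagliardoKernel, mul_div_left_comm]
  refine le_mul_of_one_le_right (by positivity) ((one_le_div (by positivity)).2 ?_)
  gcongr

theorem weightedGagliardoKernel_nonneg (hx : 0 ≤ ω x) (hy : 0 ≤ ω y) :
    0 ≤ weightedGagliardoKernel ω β u x y := by
  rw [weightedGagliardoKernel]
  positivity

theorem sq_le_weightedGagliardoKernel_add_sq (hβ : 0 ≤ β) (hx : 0 < ω x) (hy : 0 < ω y)
    (hxy : ω x ≤ A * ω y) {r : ℝ} (hr : 0 ≤ r) (hr' : ‖x - y‖ ≤ 2 * r) :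
    u x ^ 2 ≤ (2 * A * 2 ^ β + 2 * A ^ 2) *
      (r ^ β * weightedGagliardoKernel ω β u x y + u y ^ 2) := by
  have hk := weightedGagliardoKernel_nonneg (β := β) (u := u) hx.le hy.le
  calc u x ^ 2
      ≤ 2 * A * ((u x / ω x - u y / ω y) ^ 2 * (ω x * ω y)) + 2 * A ^ 2 * u y ^ 2 :=
        sq_le_of_weight_le hx hy hxy
    _ ≤ 2 * A * ((2 * r) ^ β * weightedGagliardoKernel ω β u x y) + 2 * A ^ 2 * u y ^ 2 := by
        gcongr 2 * (A : ℝ) * ?_ + _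
        exact sq_sub_mul_le_rpow_mul_weightedGagliardoKernel hβ hx.le hy.le hr'
    _ = 2 * A * 2 ^ β * (r ^ β * weightedGagliardoKernel ω β u x y) + 2 * A ^ 2 * u y ^ 2 := by
        rw [Real.mul_rpow two_pos.le hr]
        ring
    _ ≤ (2 * A * 2 ^ β + 2 * A ^ 2) * (r ^ β * weightedGagliardoKernel ω β u x y) +
          (2 * A * 2 ^ β + 2 * A ^ 2) * u y ^ 2 := by
        gcongr
        · exact le_add_of_nonneg_right (by positivity)
        · exact le_add_of_nonneg_left (by positivity)
    _ = _ := by ring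

theorem enorm_sq_le_weightedGagliardoKernel_add_enorm_sq (hβ : 0 ≤ β) (hx : 0 < ω x)
    (hy : 0 < ω y) (hxy : ω x ≤ A * ω y) {r : ℝ≥0} (hr : 0 < r) (hr' : ‖x - y‖ ≤ 2 * r) :
    ‖u x‖ₑ ^ 2 ≤ (2 * A * 2 ^ β + 2 * A ^ 2 : ℝ≥0) *
      ((r : ℝ≥0∞) ^ β * ENNReal.ofReal (weightedGagliardoKernel ω β u x y) + ‖u y‖ₑ ^ 2) := by
  have henorm (v : ℝ) : ‖v‖ₑ ^ 2 = ENNReal.ofReal (v ^ 2) := by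
    rw [Real.enorm_eq_ofReal_abs, ← ENNReal.ofReal_pow (abs_nonneg v), sq_abs]
  have hk := weightedGagliardoKernel_nonneg (β := β) (u := u) hx.le hy.le
  rw [henorm, henorm, ← ENNReal.ofReal_coe_nnreal (p := r),
    ENNReal.ofReal_rpow_of_pos (NNReal.coe_pos.2 hr), ← ENNReal.ofReal_mul (by positivity),
    ← ENNReal.ofReal_add (by positivity) (by positivity), ← ENNReal.ofReal_coe_nnreal,
    ← ENNReal.ofReal_mul NNReal.zero_le_coe]
  push_cast
  exact ENNReal.ofReal_le_ofReal
    (sq_le_weightedGagliardoKernel_add_sq hβ hx hy hxy r.coe_nonneg hr')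

theorem IsWeightedCorkscrew.exists_ball_mul_enorm_sq_le [MeasurableSpace E] [OpensMeasurableSpace E]
    {μ : Measure E} (hΩ : IsWeightedCorkscrew Ω ω A) (hβ : 0 ≤ β) (hx : x ∈ Ω) {r : ℝ≥0}
    (hr : 0 < r) (hr1 : r ≤ 1) :
    ∃ z, ball z (r / 2) ⊆ Ω ∧ ∀ u : E → ℝ, AEStronglyMeasurable u (μ.restrict Ω) →
      μ (ball z (r / 2)) * ‖u x‖ₑ ^ 2 ≤ (2 * A * 2 ^ β + 2 * A ^ 2 : ℝ≥0) *
        ((r : ℝ≥0∞) ^ β * weightedGagliardoDensity μ Ω ω β u x +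
          ∫⁻ y in ball z (r / 2), ‖u y‖ₑ ^ 2 ∂μ) := by
  obtain ⟨z, hball, hω⟩ := hΩ.exists_ball x hx r hr hr1
  obtain ⟨hsub, hdist⟩ := subset_inter_iff.1 hball
  refine ⟨z, hsub, fun u hu => ?_⟩
  have hu_ball := (hu.mono_measure (Measure.restrict_mono_set μ hsub)).enorm
  have hr_top : (r : ℝ≥0∞) ^ β ≠ ∞ := ENNReal.rpow_ne_top_of_nonneg hβ ENNReal.coe_ne_top
  calc μ (ball z (r / 2)) * ‖u x‖ₑ ^ 2
      = ∫⁻ _ in ball z (r / 2), ‖u x‖ₑ ^ 2 ∂μ := by rw [setLIntegral_const, mul_comm]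
    _ ≤ ∫⁻ y in ball z (r / 2), (2 * A * 2 ^ β + 2 * A ^ 2 : ℝ≥0) *
          ((r : ℝ≥0∞) ^ β * ENNReal.ofReal (weightedGagliardoKernel ω β u x y) +
            ‖u y‖ₑ ^ 2) ∂μ := by
        refine setLIntegral_mono' measurableSet_ball fun y hy => ?_
        exact enorm_sq_le_weightedGagliardoKernel_add_enorm_sq hβ (hΩ.pos x hx)
          (hΩ.pos y (hsub hy)) (hω y hy) hr (mem_closedBall_iff_norm'.1 (hdist hy))
    _ = (2 * A * 2 ^ β + 2 * A ^ 2 : ℝ≥0) * ((r : ℝ≥0∞) ^ β *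
          ∫⁻ y in ball z (r / 2), ENNReal.ofReal (weightedGagliardoKernel ω β u x y) ∂μ +
            ∫⁻ y in ball z (r / 2), ‖u y‖ₑ ^ 2 ∂μ) := by
        rw [lintegral_const_mul' _ _ ENNReal.coe_ne_top,
          lintegral_add_right' _ (hu_ball.pow_const 2), lintegral_const_mul' _ _ hr_top]
    _ ≤ _ := by
        rw [weightedGagliardoDensity]
        gcongr

end Kernel

section BallHalf

variable {E : Type*} [NormedAddCommGroup E] [NormedSpace ℝ E] [FiniteDimensional ℝ E]
  [MeasurableSpace E] [BorelSpace E] {μ : Measure E} [μ.IsAddHaarMeasure]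

theorem measure_ball_half (z : E) {r : ℝ≥0} (hr : 0 < r) :
    μ (ball z (r / 2)) = (r : ℝ≥0∞) ^ (finrank ℝ E : ℝ) * μ (ball 0 2⁻¹) := by
  rw [div_eq_mul_inv, Measure.addHaar_ball_mul_of_pos μ z (NNReal.coe_pos.2 hr),
    ENNReal.ofReal_pow r.coe_nonneg, ENNReal.ofReal_coe_nnreal, ENNReal.rpow_natCast]

theorem rpow_neg_finrank_mul_setLIntegral_ball_half_le {F : Type*} [NormedAddCommGroup F]
    {f : E → F} {α : ℝ} (hα : 0 < α) (hαE : α < finrank ℝ E) {Ω : Set E} {z : E} {r : ℝ≥0}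
    (hsub : ball z (r / 2) ⊆ Ω) (hf : AEStronglyMeasurable f (μ.restrict Ω)) (hr : 0 < r) :
    (r : ℝ≥0∞) ^ (-finrank ℝ E : ℝ) * ∫⁻ y in ball z (r / 2), ‖f y‖ₑ ^ 2 ∂μ ≤
      μ (ball 0 2⁻¹) ^ (α / finrank ℝ E) * ((r : ℝ≥0∞) ^ (-(finrank ℝ E - α)) *
        eLpNorm f (ENNReal.ofReal (sobolevExponent (finrank ℝ E) α)) (μ.restrict Ω) ^ 2) := by
  have hd : (0 : ℝ) < finrank ℝ E := hα.trans hαE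
  have hr0 : (r : ℝ≥0∞) ≠ 0 := by exact_mod_cast hr.ne'
  have hrestrict : μ.restrict (ball z (r / 2)) ≤ μ.restrict Ω := Measure.restrict_mono_set μ hsub
  set N := eLpNorm f (ENNReal.ofReal (sobolevExponent (finrank ℝ E) α)) (μ.restrict Ω)
  set V := μ (ball (0 : E) 2⁻¹)
  have hHolder : ∫⁻ y in ball z (r / 2), ‖f y‖ₑ ^ 2 ∂μ ≤
      N ^ 2 * ((r : ℝ≥0∞) ^ α * V ^ (α / finrank ℝ E)) :=
    calc ∫⁻ y in ball z (r / 2), ‖f y‖ₑ ^ 2 ∂μ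
        ≤ eLpNorm f (ENNReal.ofReal (sobolevExponent (finrank ℝ E) α))
            (μ.restrict (ball z (r / 2))) ^ 2 * μ (ball z (r / 2)) ^ (α / finrank ℝ E) :=
          setLIntegral_enorm_sq_le_eLpNorm_sobolevExponent hα hαE (hf.mono_measure hrestrict)
      _ ≤ N ^ 2 * μ (ball z (r / 2)) ^ (α / finrank ℝ E) := by
          gcongr
          exact eLpNorm_mono_measure f hrestrict
      _ = N ^ 2 * ((r : ℝ≥0∞) ^ α * V ^ (α / finrank ℝ E)) := by
          rw [measure_ball_half z hr, ENNReal.mul_rpow_of_nonneg _ _ (by positivity),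
            ← ENNReal.rpow_mul, mul_div_cancel₀ _ hd.ne']
  calc (r : ℝ≥0∞) ^ (-finrank ℝ E : ℝ) * ∫⁻ y in ball z (r / 2), ‖f y‖ₑ ^ 2 ∂μ
      ≤ (r : ℝ≥0∞) ^ (-finrank ℝ E : ℝ) * (N ^ 2 * ((r : ℝ≥0∞) ^ α * V ^ (α / finrank ℝ E))) := by
        gcongr
    _ = V ^ (α / finrank ℝ E) *
          ((r : ℝ≥0∞) ^ (-finrank ℝ E : ℝ) * (r : ℝ≥0∞) ^ α * N ^ 2) := by ring
    _ = _ := by rw [← ENNReal.rpow_add _ _ hr0 ENNReal.coe_ne_top, neg_sub', sub_neg_eq_add]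

end BallHalf

namespace IsWeightedCorkscrew

variable {E : Type*} [NormedAddCommGroup E] [NormedSpace ℝ E] [FiniteDimensional ℝ E]
  [MeasurableSpace E] [BorelSpace E] {μ : Measure E} [μ.IsAddHaarMeasure] {Ω : Set E} {ω : E → ℝ}
  {A : ℝ≥0} {α : ℝ}

theorem exists_ball_enorm_sq_le (hΩ : IsWeightedCorkscrew Ω ω A) (hα : 0 ≤ α) :
    ∃ C : ℝ≥0, ∀ x ∈ Ω, ∀ r : ℝ≥0, 0 < r → r ≤ 1 →
      ∃ z, ball z (r / 2) ⊆ Ω ∧ ∀ u : E → ℝ, AEStronglyMeasurable u (μ.restrict Ω) →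
        ‖u x‖ₑ ^ 2 ≤ C * ((r : ℝ≥0∞) ^ α *
            weightedGagliardoDensity μ Ω ω (finrank ℝ E + α) u x +
          (r : ℝ≥0∞) ^ (-finrank ℝ E : ℝ) * ∫⁻ y in ball z (r / 2), ‖u y‖ₑ ^ 2 ∂μ) := by
  set V := μ (ball (0 : E) 2⁻¹)
  have hV0 : V ≠ 0 := (measure_ball_pos μ 0 (by norm_num)).ne'
  have hV : V⁻¹ * V = 1 := ENNReal.inv_mul_cancel hV0 measure_ball_lt_top.ne
  set K : ℝ≥0 := 2 * A * 2 ^ (finrank ℝ E + α) + 2 * A ^ 2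
  refine ⟨(V⁻¹ * K).toNNReal, fun x hx r hr hr1 => ?_⟩
  rw [ENNReal.coe_toNNReal (by finiteness)]
  obtain ⟨z, hsub, h⟩ := hΩ.exists_ball_mul_enorm_sq_le (μ := μ) (β := finrank ℝ E + α)
    (by positivity) hx hr hr1
  refine ⟨z, hsub, fun u hu => ?_⟩
  have hr0 : (r : ℝ≥0∞) ≠ 0 := by exact_mod_cast hr.ne'
  set D := weightedGagliardoDensity μ Ω ω (finrank ℝ E + α) u x
  set T := ∫⁻ y in ball z (r / 2), ‖u y‖ₑ ^ 2 ∂μ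
  have hr_cancel : (r : ℝ≥0∞) ^ (-finrank ℝ E : ℝ) * (r : ℝ≥0∞) ^ (finrank ℝ E : ℝ) = 1 := by
    rw [← ENNReal.rpow_add _ _ hr0 ENNReal.coe_ne_top, neg_add_cancel, ENNReal.rpow_zero]
  have havg : (r : ℝ≥0∞) ^ (finrank ℝ E : ℝ) * V * ‖u x‖ₑ ^ 2 ≤
      K * ((r : ℝ≥0∞) ^ (finrank ℝ E : ℝ) * (r : ℝ≥0∞) ^ α * D + T) := by
    rw [← measure_ball_half z hr, ← ENNReal.rpow_add _ _ hr0 ENNReal.coe_ne_top]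
    exact h u hu
  generalize (r : ℝ≥0∞) ^ (finrank ℝ E : ℝ) = ρ, (r : ℝ≥0∞) ^ (-finrank ℝ E : ℝ) = ρ'
    at hr_cancel havg ⊢
  calc ‖u x‖ₑ ^ 2 = (ρ' * ρ) * (V⁻¹ * V) * ‖u x‖ₑ ^ 2 := by rw [hr_cancel, hV, one_mul, one_mul]
    _ = ρ' * V⁻¹ * (ρ * V * ‖u x‖ₑ ^ 2) := by ring
    _ ≤ ρ' * V⁻¹ * (K * (ρ * (r : ℝ≥0∞) ^ α * D + T)) := by gcongr
    _ = V⁻¹ * K * (ρ' * ρ * ((r : ℝ≥0∞) ^ α * D) + ρ' * T) := by ring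
    _ = V⁻¹ * K * ((r : ℝ≥0∞) ^ α * D + ρ' * T) := by rw [hr_cancel, one_mul]

theorem exists_enorm_sq_le_of_le_one (hΩ : IsWeightedCorkscrew Ω ω A) (hα : 0 < α)
    (hαE : α < finrank ℝ E) :
    ∃ C : ℝ≥0, ∀ u : E → ℝ, AEStronglyMeasurable u (μ.restrict Ω) → ∀ x ∈ Ω,
      (∀ r : ℝ≥0, 0 < r → r ≤ 1 → ‖u x‖ₑ ^ 2 ≤ C * ((r : ℝ≥0∞) ^ α *
          weightedGagliardoDensity μ Ω ω (finrank ℝ E + α) u x +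
        (r : ℝ≥0∞) ^ (-(finrank ℝ E - α)) *
          eLpNorm u (ENNReal.ofReal (sobolevExponent (finrank ℝ E) α)) (μ.restrict Ω) ^ 2)) ∧
      ‖u x‖ₑ ^ 2 ≤ C *
        (weightedGagliardoDensity μ Ω ω (finrank ℝ E + α) u x +
          ∫⁻ y in Ω, ‖u y‖ₑ ^ 2 ∂μ) := by
  obtain ⟨K, hK⟩ := hΩ.exists_ball_enorm_sq_le (μ := μ) hα.le
  set W := μ (ball (0 : E) 2⁻¹) ^ (α / finrank ℝ E)
  have hW : W ≠ ∞ := ENNReal.rpow_ne_top_of_nonneg (by positivity) measure_ball_lt_top.ne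
  refine ⟨(K * (1 + W)).toNNReal, fun u hu x hx => ⟨fun r hr hr1 => ?_, ?_⟩⟩ <;>
    rw [ENNReal.coe_toNNReal (by finiteness), mul_assoc]
  · obtain ⟨z, hsub, h⟩ := hK x hx r hr hr1
    refine (h u hu).trans ?_
    rw [mul_add (1 + W)]
    gcongr K * (?_ + ?_)
    · exact le_mul_of_one_le_left' le_self_add
    · refine (rpow_neg_finrank_mul_setLIntegral_ball_half_le hα hαE hsub hu hr).trans ?_
      gcongr
      exact le_add_self
  · obtain ⟨z, hsub, h⟩ := hK x hx 1 one_pos le_rfl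
    specialize h u hu
    simp only [ENNReal.coe_one, ENNReal.one_rpow, one_mul] at h
    refine h.trans ?_
    gcongr K * ?_
    refine le_mul_of_one_le_of_le le_self_add ?_
    gcongr

theorem exists_enorm_sq_le (hΩ : IsWeightedCorkscrew Ω ω A) (hα : 0 < α)
    (hαE : α < finrank ℝ E) :
    ∃ C : ℝ≥0, ∀ u : E → ℝ, AEStronglyMeasurable u (μ.restrict Ω) → ∀ x ∈ Ω, ∀ r : ℝ≥0, 0 < r →
      ‖u x‖ₑ ^ 2 ≤ C * ((r : ℝ≥0∞) ^ α *
          (weightedGagliardoDensity μ Ω ω (finrank ℝ E + α) u x +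
            ∫⁻ y in Ω, ‖u y‖ₑ ^ 2 ∂μ) +
        (r : ℝ≥0∞) ^ (-(finrank ℝ E - α)) *
          eLpNorm u (ENNReal.ofReal (sobolevExponent (finrank ℝ E) α)) (μ.restrict Ω) ^ 2) := by
  obtain ⟨C, hC⟩ := hΩ.exists_enorm_sq_le_of_le_one (μ := μ) hα hαE
  refine ⟨C, fun u hu x hx r hr => ?_⟩
  obtain ⟨hsmall, hone⟩ := hC u hu x hx
  rcases le_total r 1 with hr1 | hr1
  · refine (hsmall r hr hr1).trans ?_
    gcongr
    exact le_self_add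
  · refine hone.trans ?_
    gcongr C * ?_
    exact le_add_of_le_left
      (le_mul_of_one_le_left' (ENNReal.one_le_rpow (by exact_mod_cast hr1) hα))

theorem exists_enorm_rpow_sobolevExponent_le (hΩ : IsWeightedCorkscrew Ω ω A) (hα : 0 < α)
    (hαE : α < finrank ℝ E) :
    ∃ K : ℝ≥0, ∀ u : E → ℝ,
      MemLp u (ENNReal.ofReal (sobolevExponent (finrank ℝ E) α)) (μ.restrict Ω) →
      eLpNorm u (ENNReal.ofReal (sobolevExponent (finrank ℝ E) α)) (μ.restrict Ω) ≠ 0 →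
      ∀ x ∈ Ω, ‖u x‖ₑ ^ sobolevExponent (finrank ℝ E) α ≤
        K * eLpNorm u (ENNReal.ofReal (sobolevExponent (finrank ℝ E) α)) (μ.restrict Ω) ^
          (sobolevExponent (finrank ℝ E) α - 2) *
        (weightedGagliardoDensity μ Ω ω (finrank ℝ E + α) u x + ∫⁻ y in Ω, ‖u y‖ₑ ^ 2 ∂μ) := by
  obtain ⟨C, hC⟩ := hΩ.exists_enorm_sq_le (μ := μ) hα hαE
  have hp := sobolevExponent_pos hα hαE
  set p := sobolevExponent (finrank ℝ E) α
  have hK : (2 * C : ℝ≥0∞) ^ (p / 2) ≠ ∞ :=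
    ENNReal.rpow_ne_top_of_nonneg (by positivity) (by finiteness)
  refine ⟨((2 * C : ℝ≥0∞) ^ (p / 2)).toNNReal, fun u hu hN x hx => ?_⟩
  rw [ENNReal.coe_toNNReal hK]
  have hS : ∫⁻ y in Ω, ‖u y‖ₑ ^ 2 ∂μ ≠ 0 := by
    rw [← eLpNorm_two_sq_eq_lintegral]
    refine pow_ne_zero 2 fun hu2 => hN ?_
    rw [eLpNorm_congr_ae ((eLpNorm_eq_zero_iff hu.1 two_ne_zero).1 hu2), eLpNorm_zero]
  refine rpow_sobolevExponent_le_of_sq_le hα hαE ?_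
  have h := le_two_mul_rpow_mul_rpow_of_forall_le hα (sub_pos.2 hαE)
    (b := weightedGagliardoDensity μ Ω ω (finrank ℝ E + α) u x + ∫⁻ y in Ω, ‖u y‖ₑ ^ 2 ∂μ)
    (by simp [hS]) (pow_ne_zero 2 hN) (ENNReal.pow_ne_top hu.eLpNorm_ne_top) (hC u hu.1 x hx)
  rwa [add_sub_cancel] at h

theorem exists_eLpNorm_sq_le (hΩ : IsWeightedCorkscrew Ω ω A) (hΩm : MeasurableSet Ω)
    (hμΩ : μ Ω ≠ ∞) (hα : 0 < α) (hαE : α < finrank ℝ E) :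
    ∃ K : ℝ≥0, ∀ u : E → ℝ,
      MemLp u (ENNReal.ofReal (sobolevExponent (finrank ℝ E) α)) (μ.restrict Ω) →
      eLpNorm u (ENNReal.ofReal (sobolevExponent (finrank ℝ E) α)) (μ.restrict Ω) ^ 2 ≤
        K * ((∫⁻ x in Ω, weightedGagliardoDensity μ Ω ω (finrank ℝ E + α) u x ∂μ) +
          ∫⁻ x in Ω, ‖u x‖ₑ ^ 2 ∂μ) := by
  obtain ⟨K, hK⟩ := hΩ.exists_enorm_rpow_sobolevExponent_le (μ := μ) hα hαE
  have hp := two_lt_sobolevExponent hα hαE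
  refine ⟨(K * (1 + μ Ω)).toNNReal, fun u hu => ?_⟩
  rw [ENNReal.coe_toNNReal (by finiteness)]
  set p := sobolevExponent (finrank ℝ E) α
  set D := weightedGagliardoDensity μ Ω ω (finrank ℝ E + α) u
  set S := ∫⁻ x in Ω, ‖u x‖ₑ ^ 2 ∂μ
  set N := eLpNorm u (ENNReal.ofReal p) (μ.restrict Ω)
  rcases eq_or_ne N 0 with hN0 | hN0
  · simp [hN0]
  have hN_top : N ≠ ∞ := hu.eLpNorm_ne_top
  have hcancel : N ^ (p - 2) * N ^ 2 ≤
      N ^ (p - 2) * (K * (1 + μ Ω) * ((∫⁻ x in Ω, D x ∂μ) + S)) :=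
    calc N ^ (p - 2) * N ^ 2 = N ^ p := by
          rw [← ENNReal.rpow_two, ← ENNReal.rpow_add _ _ hN0 hN_top, sub_add_cancel]
      _ = ∫⁻ x in Ω, ‖u x‖ₑ ^ p ∂μ := eLpNorm_ofReal_rpow_eq_lintegral (by linarith)
      _ ≤ ∫⁻ x in Ω, K * N ^ (p - 2) * (D x + S) ∂μ := setLIntegral_mono' hΩm (hK u hu hN0)
      _ = N ^ (p - 2) * (K * ((∫⁻ x in Ω, D x ∂μ) + S * μ Ω)) := by
          rw [lintegral_const_mul' _ _ (by finiteness), lintegral_add_right _ measurable_const,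
            setLIntegral_const]
          ring
      _ ≤ N ^ (p - 2) * (K * ((∫⁻ x in Ω, D x ∂μ) * (1 + μ Ω) + S * (1 + μ Ω))) := by
          gcongr
          · exact le_mul_of_one_le_right' le_self_add
          · exact le_add_self
      _ = _ := by ring
  refine (ENNReal.mul_le_mul_iff_right ?_ (by finiteness)).1 hcancel
  simp [ENNReal.rpow_eq_zero_iff, hN0, hN_top]

end IsWeightedCorkscrew

section UnitBall

variable {E : Type*} [NormedAddCommGroup E] [NormedSpace ℝ E]

theorem isWeightedCorkscrew_ball {γ : ℝ} (hγ : 0 ≤ γ) :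
    IsWeightedCorkscrew (ball (0 : E) 1) (fun x => (1 - ‖x‖ ^ 2) ^ γ) (4 ^ γ) where
  pos x hx := by
    have hx1 : ‖x‖ < 1 := mem_ball_zero_iff.1 hx
    exact Real.rpow_pos_of_pos (by nlinarith [norm_nonneg x]) γ
  exists_ball x hx r hr hr1 := by
    have hx1 : ‖x‖ < 1 := mem_ball_zero_iff.1 hx
    have hdist_boundary : ∀ y ∈ ball ((1 - r) • x) (r / 2), (1 - ‖x‖) / 2 ≤ 1 - ‖y‖ := by
      intro y hy
      have hy' : ‖y‖ ≤ (1 - r) * ‖x‖ + r / 2 := by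
        have h := norm_le_norm_add_norm_sub' y ((1 - r) • x)
        rw [norm_smul_of_nonneg (by linarith)] at h
        linarith [mem_ball_iff_norm.1 hy]
      nlinarith [mul_nonneg (sub_nonneg.2 hr1) (sub_nonneg.2 hx1.le),
        mul_nonneg hr.le (norm_nonneg x)]
    refine ⟨(1 - r) • x, fun y hy => ⟨?_, ?_⟩, fun y hy => ?_⟩
    · rw [mem_ball_zero_iff]
      linarith [hdist_boundary y hy]
    · have hzx : dist ((1 - r) • x) x = r * ‖x‖ := by
        rw [dist_eq_norm, show (1 - r) • x - x = -(r • x) by module, norm_neg,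
          norm_smul_of_nonneg hr.le]
      rw [mem_closedBall]
      nlinarith [dist_triangle y ((1 - r) • x) x, mem_ball.1 hy]
    · have h := hdist_boundary y hy
      have hx0 : 0 ≤ 1 - ‖x‖ ^ 2 := by nlinarith [norm_nonneg x]
      have hy0 : 0 ≤ 1 - ‖y‖ ^ 2 := by nlinarith [norm_nonneg y]
      rw [NNReal.coe_rpow, NNReal.coe_ofNat, ← Real.mul_rpow (by norm_num) hy0]
      exact Real.rpow_le_rpow hx0 (by nlinarith [norm_nonneg y]) hγ

theorem weighted_sobolev_ball_general [FiniteDimensional ℝ E] [MeasurableSpace E] [BorelSpace E]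
    (μ : Measure E) [μ.IsAddHaarMeasure] {α γ : ℝ} (hα : 0 < α) (hαE : α < finrank ℝ E)
    (hγ : 0 ≤ γ) :
    ∃ c' : ℝ, 0 < c' ∧ ∀ u : E → ℝ,
      MemLp u (ENNReal.ofReal (sobolevExponent (finrank ℝ E) α)) (μ.restrict (ball 0 1)) →
      ENNReal.ofReal (c' * (∫ x in ball 0 1, |u x| ^ sobolevExponent (finrank ℝ E) α ∂μ) ^
          (2 / sobolevExponent (finrank ℝ E) α)) ≤
        (∫⁻ x in ball 0 1, weightedGagliardoDensity μ (ball 0 1) (fun z => (1 - ‖z‖ ^ 2) ^ γ)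
            (finrank ℝ E + α) u x ∂μ) +
          ENNReal.ofReal (∫ x in ball 0 1, u x ^ 2 ∂μ) := by
  have hp := two_lt_sobolevExponent hα hαE
  obtain ⟨K, hK⟩ := (isWeightedCorkscrew_ball (E := E) hγ).exists_eLpNorm_sq_le measurableSet_ball
    (measure_ball_lt_top (μ := μ)).ne hα hαE
  refine ⟨((K : ℝ) + 1)⁻¹, by positivity, fun u hu => ?_⟩
  have : IsFiniteMeasure (μ.restrict (ball 0 1)) :=
    isFiniteMeasure_restrict.2 measure_ball_lt_top.ne
  have hu2 : MemLp u (ENNReal.ofReal 2) (μ.restrict (ball 0 1)) :=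
    hu.mono_exponent (ENNReal.ofReal_le_ofReal hp.le)
  have hnorm_p := ofReal_integral_norm_rpow_eq_eLpNorm_sq (two_pos.trans hp) hu
  have hnorm_two : ENNReal.ofReal (∫ x in ball 0 1, u x ^ 2 ∂μ) =
      ∫⁻ x in ball 0 1, ‖u x‖ₑ ^ 2 ∂μ := by
    simpa [eLpNorm_two_sq_eq_lintegral] using ofReal_integral_norm_rpow_eq_eLpNorm_sq two_pos hu2
  simp only [Real.norm_eq_abs] at hnorm_p
  rw [hnorm_two, ENNReal.ofReal_mul (by positivity), hnorm_p,
    ENNReal.ofReal_inv_of_pos (by positivity), mul_comm, ← div_eq_mul_inv]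
  refine ENNReal.div_le_of_le_mul' ((hK u hu).trans ?_)
  rw [ENNReal.ofReal_add NNReal.zero_le_coe zero_le_one, ENNReal.ofReal_coe_nnreal]
  gcongr
  exact le_self_add

end UnitBall

/-- Weighted Sobolev inequality on the unit ball:
`∫_B∫_B (u(x)/w_n(x) - u(y)/w_n(y))² w_n(x)w_n(y)/|x-y|^{n+α} dx dy + ∫_B u²
  ≥ c' (∫_B |u|^{2*})^{2/2*}` with `2* = 2n/(n-α)`. -/
theorem weighted_sobolev_ball (n : ℕ) (hn : 2 ≤ n) (α : ℝ) (hα1 : 1 < α)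
    (hα2 : α < 2) (hαn : α < n) :
    ∃ c' : ℝ, 0 < c' ∧ ∀ u : EuclideanSpace ℝ (Fin n) → ℝ,
      Continuous u → HasCompactSupport u →
      tsupport u ⊆ ball (0 : EuclideanSpace ℝ (Fin n)) 1 →
      (∫⁻ x in ball (0 : EuclideanSpace ℝ (Fin n)) 1,
          ∫⁻ y in ball (0 : EuclideanSpace ℝ (Fin n)) 1,
            ENNReal.ofReal ((u x / w n α x - u y / w n α y) ^ 2 *
              (w n α x * w n α y) / ‖x - y‖ ^ ((n : ℝ) + α))) +
        ENNReal.ofReal (∫ x in ball (0 : EuclideanSpace ℝ (Fin n)) 1, (u x) ^ 2) ≥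
      ENNReal.ofReal (c' *
        (∫ x in ball (0 : EuclideanSpace ℝ (Fin n)) 1,
          |u x| ^ ((2 * n) / ((n : ℝ) - α))) ^ (2 / ((2 * n) / ((n : ℝ) - α)))) := by
  obtain ⟨c', hc', h⟩ := weighted_sobolev_ball_general (volume : Measure (EuclideanSpace ℝ (Fin n)))
    (zero_lt_one.trans hα1) (by simpa using hαn) (γ := (α - 1) / 2) (by linarith)
  rw [finrank_euclideanSpace_fin] at h
  exact ⟨c', hc', fun u hu hsupp _ => h u ((hu.memLp_of_hasCompactSupport hsupp).restrict _)⟩
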